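/- (Stability of effective nonzeros under noise) Let A ∈ R^{m×n} satisfy the 2k-RIP with constant δ ∈ (0,1). Let x, y ∈ R^n, let S_x, S_y be the index sets of the k largest-magnitude entries of x and y, set T = S_x ∪ S_y and h = y - x, and assume ‖x_{S_x^c}‖₂ ≤ ε_x, ‖y_{S_y^c}‖₂ ≤ ε_y, and Ah = e for some e ∈ R^m. Then ‖h_T‖₂ ≤ (√(2(n-2k))·δ / ((1-δ)√k))·(ε_x + ε_y) + (√(1+δ)/(1-δ))·‖e‖₂. -/

import Mathlib

open Finset Real Matrix

def IsSparse {n : ℕ} (s : ℕ) (u : Fin n → ℝ) : Prop :=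
  (Finset.univ.filter (fun i => u i ≠ 0)).card ≤ s

noncomputable def l2norm {n : ℕ} (u : Fin n → ℝ) : ℝ :=
  Real.sqrt (∑ i, (u i) ^ 2)

def SatisfiesRIP {m n : ℕ} (A : Matrix (Fin m) (Fin n) ℝ) (s : ℕ) (δ : ℝ) : Prop :=
  ∀ u : Fin n → ℝ, IsSparse s u →
    (1 - δ) * (l2norm u) ^ 2 ≤ (l2norm (A.mulVec u)) ^ 2 ∧
    (l2norm (A.mulVec u)) ^ 2 ≤ (1 + δ) * (l2norm u) ^ 2

/-- Restriction of a vector to an index set (zero outside). -/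
noncomputable def restrict {n : ℕ} (x : Fin n → ℝ) (I : Finset (Fin n)) :
    Fin n → ℝ := fun i => if i ∈ I then x i else 0

/-- The sums of `b` over disjoint blocks of total size at most `s` are, up to the factors `1 ± δ`,
orthogonal with squared norms given by the sums of `p`. -/
def IsBlockNearIsometry {ι E : Type*} [NormedAddCommGroup E] [InnerProductSpace ℝ E]
    (b : ι → E) (p : ι → ℝ) (s : ℕ) (δ : ℝ) : Prop :=
  ∀ I J : Finset ι, Disjoint I J → I.card + J.card ≤ s → ∀ α β : ℝ,
    (1 - δ) * (α ^ 2 * ∑ i ∈ I, p i + β ^ 2 * ∑ i ∈ J, p i)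
        ≤ ‖α • ∑ i ∈ I, b i + β • ∑ i ∈ J, b i‖ ^ 2 ∧
      ‖α • ∑ i ∈ I, b i + β • ∑ i ∈ J, b i‖ ^ 2
        ≤ (1 + δ) * (α ^ 2 * ∑ i ∈ I, p i + β ^ 2 * ∑ i ∈ J, p i)

/-- A bound on the sum of `f` over every `s`-element subset of `V` scales to `V`. -/
lemma card_mul_sum_le_of_forall_card_eq {ι : Type*} [DecidableEq ι] {f : ι → ℝ} {V : Finset ι}
    {s : ℕ} {D : ℝ} (hs : 0 < s) (hsV : s ≤ V.card)
    (h : ∀ J ⊆ V, J.card = s → ∑ i ∈ J, f i ≤ D) :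
    s * ∑ i ∈ V, f i ≤ V.card * D := by
  suffices key : ∀ t, s ≤ t → ∀ J ⊆ V, J.card = t → s * ∑ i ∈ J, f i ≤ t * D from
    key _ hsV V subset_rfl rfl
  intro t ht
  induction t, ht using Nat.le_induction with
  | base =>
    intro J hJ hc
    exact mul_le_mul_of_nonneg_left (h J hJ hc) (Nat.cast_nonneg s)
  | succ t ht ih =>
    intro J hJ hc
    have htpos : (0 : ℝ) < t := by exact_mod_cast hs.trans_le ht
    have hi : ∀ i ∈ J, s * (∑ j ∈ J, f j - f i) ≤ t * D := by
      intro i hi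
      rw [← Finset.sum_erase_eq_sub hi]
      exact ih _ ((Finset.erase_subset i J).trans hJ) (by rw [Finset.card_erase_of_mem hi, hc]; rfl)
    have hsum := Finset.sum_le_sum hi
    rw [← Finset.mul_sum, Finset.sum_sub_distrib] at hsum
    simp only [Finset.sum_const, hc, nsmul_eq_mul] at hsum
    push_cast at hsum ⊢
    nlinarith [le_of_mul_le_mul_left (a := (t : ℝ)) (b := s * ∑ j ∈ J, f j) (c := (t + 1) * D)
      (by linarith) htpos]

section BlockNearIsometry

variable {ι E : Type*} [NormedAddCommGroup E] [InnerProductSpace ℝ E]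
  {b : ι → E} {p : ι → ℝ} {k : ℕ} {δ : ℝ}

lemma IsBlockNearIsometry.single {s : ℕ} (H : IsBlockNearIsometry b p s δ) {I : Finset ι}
    (hI : I.card ≤ s) :
    (1 - δ) * ∑ i ∈ I, p i ≤ ‖∑ i ∈ I, b i‖ ^ 2 ∧
      ‖∑ i ∈ I, b i‖ ^ 2 ≤ (1 + δ) * ∑ i ∈ I, p i := by
  simpa using H I ∅ (Finset.disjoint_empty_right I) (by simpa using hI) 1 0

/-- The lower bound for blocks of size `2k` degrades linearly in the size of larger blocks. -/
lemma IsBlockNearIsometry.lower_bound [DecidableEq ι] (hk : 0 < k) (H : IsBlockNearIsometry b p (2 * k) δ)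
    (J : Finset ι) (hJ : 2 * k ≤ J.card) :
    (k * (1 + δ) - J.card * δ) * ∑ i ∈ J, p i ≤ k * ‖∑ i ∈ J, b i‖ ^ 2 := by
  suffices key : ∀ m, 2 * k ≤ m → ∀ J : Finset ι, J.card = m →
      (k * (1 + δ) - m * δ) * ∑ i ∈ J, p i ≤ k * ‖∑ i ∈ J, b i‖ ^ 2 from key _ hJ J rfl
  intro m hm
  induction m, hm using Nat.le_induction with
  | base =>
    intro J hJ
    have h := mul_le_mul_of_nonneg_left (H.single hJ.le).1 (Nat.cast_nonneg (α := ℝ) k)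
    push_cast
    linarith
  | succ m hm ih =>
    intro J hJ
    have hmpos : (0 : ℝ) < m := by
      have : 0 < m := by omega
      exact_mod_cast this
    set y := ∑ i ∈ J, b i with hy
    set P := ∑ i ∈ J, p i with hP
    set D := ∑ i ∈ J, ‖b i‖ ^ 2 with hD
    have hinner : ∑ i ∈ J, inner ℝ y (b i) = ‖y‖ ^ 2 := by
      rw [← inner_sum, real_inner_self_eq_norm_sq]
    have herase : (k * (1 + δ) - m * δ) * (m * P) ≤ k * ((m - 1) * ‖y‖ ^ 2 + D) := by
      have hi : ∀ i ∈ J, (k * (1 + δ) - m * δ) * (P - p i)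
          ≤ k * (‖y‖ ^ 2 - 2 * inner ℝ y (b i) + ‖b i‖ ^ 2) := by
        intro i hi
        rw [← norm_sub_sq_real, hP, hy, ← Finset.sum_erase_eq_sub hi,
          ← Finset.sum_erase_eq_sub hi]
        exact ih _ (by rw [Finset.card_erase_of_mem hi, hJ]; rfl)
      have hsum := Finset.sum_le_sum hi
      rw [← Finset.mul_sum, ← Finset.mul_sum, Finset.sum_sub_distrib, Finset.sum_add_distrib,
        Finset.sum_sub_distrib, ← Finset.mul_sum, hinner] at hsum
      simp only [Finset.sum_const, hJ, nsmul_eq_mul] at hsum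
      push_cast at hsum
      linarith
    have hpairs : (m + 1) * D ≤ ‖y‖ ^ 2 + (1 + δ) * (m * P) := by
      have hij : ∀ i ∈ J, ∀ j ∈ J, ‖b i‖ ^ 2 - 2 * inner ℝ (b i) (b j) + ‖b j‖ ^ 2
          ≤ (1 + δ) * (p i + p j - if i = j then 2 * p i else 0) := by
        intro i _ j _
        rw [← norm_sub_sq_real]
        split_ifs with h
        · subst h
          simp
          linarith
        · have := (H {i} {j} (by simpa using h)
            (by simp only [Finset.card_singleton]; omega) 1 (-1)).2
          simpa [sub_eq_add_neg] using this
      have hsum := Finset.sum_le_sum fun i hi => Finset.sum_le_sum (hij i hi)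
      have hcross : ∑ i ∈ J, ∑ j ∈ J, inner ℝ (b i) (b j) = ‖y‖ ^ 2 := by
        rw [← hinner, hy]
        simp_rw [sum_inner]
        rw [Finset.sum_comm]
      have hdiag : ∑ i ∈ J, ∑ j ∈ J, (if i = j then 2 * p i else 0) = 2 * P := by
        rw [hP, Finset.mul_sum]
        refine Finset.sum_congr rfl fun i hi => ?_
        simp [hi]
      simp only [← Finset.mul_sum, Finset.sum_sub_distrib, Finset.sum_add_distrib, hcross, hdiag,
        Finset.sum_const, hJ, nsmul_eq_mul] at hsum
      push_cast at hsum
      linarith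
    refine le_of_mul_le_mul_left ?_ (mul_pos hmpos hmpos)
    have h1 := mul_le_mul_of_nonneg_left herase (by linarith : (0 : ℝ) ≤ m + 1)
    have h2 := mul_le_mul_of_nonneg_left hpairs (Nat.cast_nonneg (α := ℝ) k)
    push_cast
    linarith

/-- Polarization: near-isometry bounds the inner product of sums over disjoint blocks. -/
lemma IsBlockNearIsometry.neg_inner_le {s : ℕ} (H : IsBlockNearIsometry b p s δ) {I J : Finset ι}
    (hIJ : Disjoint I J) (hs : I.card + J.card ≤ s) (α β γ : ℝ) :
    2 * α * (β + γ) * -inner ℝ (∑ i ∈ I, b i) (∑ i ∈ J, b i)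
        + (β ^ 2 - γ ^ 2) * ‖∑ i ∈ J, b i‖ ^ 2
      ≤ 2 * δ * α ^ 2 * ∑ i ∈ I, p i
        + ((1 + δ) * β ^ 2 - (1 - δ) * γ ^ 2) * ∑ i ∈ J, p i := by
  have h1 := (H I J hIJ hs α (-β)).2
  have h2 := (H I J hIJ hs α γ).1
  rw [norm_add_sq_real, inner_smul_left, inner_smul_right, norm_smul, norm_smul, mul_pow, mul_pow,
    Real.norm_eq_abs, Real.norm_eq_abs, sq_abs, sq_abs] at h1 h2
  simp only [conj_trivial] at h1 h2
  linarith

/-- Blocks `T` of size `2k` and `U` of size at least `k` are nearly orthogonal. -/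
lemma IsBlockNearIsometry.neg_inner_le_of_le_card [DecidableEq ι] (hk : 0 < k)
    (H : IsBlockNearIsometry b p (2 * k) δ) {T U : Finset ι} (hTU : Disjoint T U)
    (hT : T.card = 2 * k) (hU : k ≤ U.card) (α β : ℝ) :
    k * (2 * α * β * -inner ℝ (∑ i ∈ T, b i) (∑ i ∈ U, b i))
      ≤ δ * (U.card * α ^ 2 * ∑ i ∈ T, p i + 2 * k * β ^ 2 * ∑ i ∈ U, p i) := by
  have hk0 : (0 : ℝ) < k := by exact_mod_cast hk
  have hI : ∀ I ⊆ T, I.card = k →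
      ∑ i ∈ I, (k * (2 * α * β * -inner ℝ (b i) (∑ j ∈ U, b j)) - δ * U.card * α ^ 2 * p i)
        ≤ k * δ * β ^ 2 * ∑ i ∈ U, p i := by
    intro I hIT hIk
    have hJ : ∀ J ⊆ U, J.card = k →
        ∑ j ∈ J, (2 * α * β * -inner ℝ (∑ i ∈ I, b i) (b j) - δ * β ^ 2 * p j)
          ≤ δ * α ^ 2 * ∑ i ∈ I, p i := by
      intro J hJU hJk
      have h := H.neg_inner_le (hTU.mono hIT hJU) (by omega) α β β
      rw [Finset.sum_sub_distrib, ← Finset.mul_sum, ← Finset.mul_sum, Finset.sum_neg_distrib,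
        ← inner_sum]
      linarith
    have h := card_mul_sum_le_of_forall_card_eq hk hU hJ
    rw [Finset.sum_sub_distrib, ← Finset.mul_sum, ← Finset.mul_sum, Finset.sum_neg_distrib,
      ← inner_sum] at h
    rw [Finset.sum_sub_distrib, ← Finset.mul_sum, ← Finset.mul_sum, ← Finset.mul_sum,
      Finset.sum_neg_distrib, ← sum_inner]
    linarith
  have h := card_mul_sum_le_of_forall_card_eq hk (by omega) hI
  rw [Finset.sum_sub_distrib, ← Finset.mul_sum, ← Finset.mul_sum, ← Finset.mul_sum,
    Finset.sum_neg_distrib, ← sum_inner, hT] at h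
  refine le_of_mul_le_mul_left ?_ hk0
  push_cast at h
  linarith

/-- Near-orthogonality of a block `T` of size `2k` and a block `U` of size less than `k`, with the
norm of the sum over `U` entering the bound. -/
lemma IsBlockNearIsometry.neg_inner_le_of_card_lt [DecidableEq ι] (H : IsBlockNearIsometry b p (2 * k) δ)
    {T U : Finset ι} (hTU : Disjoint T U) (hT : T.card = 2 * k) (hU : U.card < k) {ν : ℝ}
    (hν : ν * k = U.card) (w : ℝ) :
    (2 - ν) * (2 * w * -inner ℝ (∑ i ∈ T, b i) (∑ i ∈ U, b i) - δ * w ^ 2 * ∑ i ∈ T, p i)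
        + 4 * (1 - ν) * ‖∑ i ∈ U, b i‖ ^ 2
      ≤ (4 * (1 - ν) + δ * (4 - 4 * ν + 2 * ν ^ 2)) * ∑ i ∈ U, p i := by
  have hk0 : (0 : ℝ) < k := by exact_mod_cast (by omega : 0 < k)
  have hI : ∀ I ⊆ T, I.card = 2 * k - U.card →
      ∑ i ∈ I, (4 * w * -inner ℝ (b i) (∑ j ∈ U, b j) - 2 * δ * w ^ 2 * p i)
        ≤ ((1 + δ) * (2 - ν) ^ 2 - (1 - δ) * ν ^ 2) * ∑ i ∈ U, p i
          - 4 * (1 - ν) * ‖∑ i ∈ U, b i‖ ^ 2 := by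
    intro I hIT hIc
    have h := H.neg_inner_le (hTU.mono_left hIT) (by omega) w (2 - ν) ν
    rw [Finset.sum_sub_distrib, ← Finset.mul_sum, ← Finset.mul_sum, Finset.sum_neg_distrib,
      ← sum_inner]
    linarith
  have h := card_mul_sum_le_of_forall_card_eq (by omega) (by omega) hI
  rw [Finset.sum_sub_distrib, ← Finset.mul_sum, ← Finset.mul_sum, Finset.sum_neg_distrib,
    ← sum_inner, hT, Nat.cast_sub (by omega), ← hν] at h
  refine le_of_mul_le_mul_left ?_ hk0
  push_cast at h
  linarith

end BlockNearIsometry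

/-- The scalar inequality behind the case of a small complement and a small isometry constant. -/
lemma one_sub_mul_one_add_mul_sqrt_le {δ ν : ℝ} (hδ0 : 0 < δ) (hδ1 : δ < 1) (hν1 : ν ≤ 1)
    (h : 2 * (1 - δ) ≤ ν * (1 + δ)) :
    (1 - ν) * (1 + δ) * Real.sqrt (1 - δ) ≤ δ * ((2 - ν) * (1 - δ) + 4 * δ * (1 - ν)) := by
  have hsqrt : Real.sqrt (1 - δ) ≤ 1 - δ / 2 :=
    Real.sqrt_le_iff.mpr ⟨by linarith, by nlinarith⟩
  obtain ⟨m, rfl⟩ : ∃ m, ν = 1 - m := ⟨1 - ν, by ring⟩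
  have hm : 0 ≤ m := by linarith
  have hmδ : m * (1 + δ) ≤ 3 * δ - 1 := by linarith
  have h1 : m * (1 + δ) * Real.sqrt (1 - δ) ≤ m * (1 + δ) * (1 - δ / 2) :=
    mul_le_mul_of_nonneg_left hsqrt (by positivity)
  suffices m * (1 + δ / 2 - δ ^ 2 / 2 - 4 * δ ^ 2 - δ * (1 - δ)) ≤ δ * (1 - δ) by linarith
  have hδδ : 0 < δ * (1 - δ) := mul_pos hδ0 (by linarith)
  rcases le_or_gt (1 + δ / 2 - δ ^ 2 / 2 - 4 * δ ^ 2 - δ * (1 - δ)) 0 with hc | hc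
  · exact (mul_nonpos_of_nonneg_of_nonpos hm hc).trans hδδ.le
  · refine le_of_mul_le_mul_left ?_ (by linarith : 0 < 1 + δ)
    have h2 := mul_le_mul_of_nonneg_right hmδ hc.le
    nlinarith [mul_pos hδ0 hδδ, sq_nonneg (δ - 1 / 3), sq_nonneg (2 * δ - 1)]

/-- The final estimate for a small complement. Here `a`, `b` are the norms on and off the block,
`ε` is the norm of the image, and `P = ‖u‖ ^ 2`, `R = ‖v‖ ^ 2`, `X = -⟪u, v⟫` for the images `u`,
`v` of the two parts. -/
lemma one_sub_mul_le_of_small_complement {δ ν a b ε P R X : ℝ} (hδ0 : 0 < δ) (hδ1 : δ < 1)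
    (hν0 : 0 ≤ ν) (hν1 : ν < 1) (ha : 0 < a) (hb : 0 ≤ b) (hε : 0 ≤ ε)
    (hP : (1 - δ) * a ^ 2 ≤ P) (hPX : P - X ≤ Real.sqrt P * ε) (hεPR : ε ^ 2 = P - 2 * X + R)
    (hX : ∀ w : ℝ, (2 - ν) * (2 * w * X - δ * w ^ 2 * a ^ 2) + 4 * (1 - ν) * R
      ≤ (4 * (1 - ν) + δ * (4 - 4 * ν + 2 * ν ^ 2)) * b ^ 2)
    (hlow : (1 - (1 + ν) * δ) * (a ^ 2 + b ^ 2) ≤ ε ^ 2) :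
    (1 - δ) * a ≤ Real.sqrt (2 * ν) * δ * b + Real.sqrt (1 + δ) * ε := by
  set r := Real.sqrt (1 - δ) with hr
  set s := Real.sqrt (1 + δ) with hs
  set g := Real.sqrt (2 * ν) with hg
  set D := (2 - ν) * (1 - δ) + 4 * δ * (1 - ν) with hD
  have hr2 : r ^ 2 = 1 - δ := Real.sq_sqrt (by linarith)
  have hs2 : s ^ 2 = 1 + δ := Real.sq_sqrt (by linarith)
  have hg2 : g ^ 2 = 2 * ν := Real.sq_sqrt (by linarith)
  have hr0 : 0 < r := Real.sqrt_pos.mpr (by linarith)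
  have hs0 : 0 < s := Real.sqrt_pos.mpr (by linarith)
  have hg0 : 0 ≤ g := Real.sqrt_nonneg _
  have hD0 : 0 < D := by
    have : 0 < (2 - ν) * (1 - δ) := mul_pos (by linarith) (by linarith)
    have : 0 < 4 * δ * (1 - ν) := mul_pos (by linarith) (by linarith)
    linarith
  have hrs : r ≤ s := Real.sqrt_le_sqrt (by linarith)
  have hgb : 0 ≤ g * δ * b := by positivity
  -- the part `ε` of `r * a` is absorbed by the last term
  suffices htail : r * (r * a - ε) ≤ g * δ * b + (s - r) * ε by
    rw [← hr2]
    linarith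
  rcases le_or_gt (r * a - ε) 0 with ht | ht
  · have := mul_nonpos_of_nonneg_of_nonpos hr0.le ht
    have := mul_nonneg (sub_nonneg.mpr hrs) hε
    linarith
  have hP0 : 0 ≤ P := le_trans (mul_nonneg (by linarith) (sq_nonneg a)) hP
  have hp2 : Real.sqrt P ^ 2 = P := Real.sq_sqrt hP0
  have hrp : r * a ≤ Real.sqrt P := Real.le_sqrt_of_sq_le (by rw [mul_pow, hr2]; exact hP)
  set q := Real.sqrt P
  set t := r * a - ε with ht_def
  have hXt : r * a * t ≤ X := by
    have : r * a * t ≤ q * (q - ε) :=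
      mul_le_mul hrp (by linarith) ht.le (by linarith [mul_pos hr0 ha])
    linarith
  have hRt : t ^ 2 ≤ R := by
    have : t ^ 2 ≤ (q - ε) ^ 2 := pow_le_pow_left₀ ht.le (by linarith) 2
    linarith
  have hmain : (1 - δ) * t ^ 2 * D
      ≤ (2 * ν * δ ^ 2 * D + 4 * δ * (1 - ν) * (1 + δ) * (1 - (1 + ν) * δ)) * b ^ 2 := by
    have hw := hX (r * t / (δ * a))
    have hw1 : r ^ 2 * t ^ 2 / δ
        ≤ 2 * (r * t / (δ * a)) * X - δ * (r * t / (δ * a)) ^ 2 * a ^ 2 := by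
      have hpos : 0 ≤ 2 * (r * t / (δ * a)) := by positivity
      have h1 := mul_le_mul_of_nonneg_left hXt hpos
      have h2 : 2 * (r * t / (δ * a)) * (r * a * t) - δ * (r * t / (δ * a)) ^ 2 * a ^ 2
          = r ^ 2 * t ^ 2 / δ := by
        field_simp
        ring
      linarith
    have h3 := mul_le_mul_of_nonneg_left hw1 (by linarith : 0 ≤ 2 - ν)
    have h4 := mul_le_mul_of_nonneg_left hRt (by linarith : 0 ≤ 4 * (1 - ν))
    have h5 : (2 - ν) * (r ^ 2 * t ^ 2 / δ) + 4 * (1 - ν) * t ^ 2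
        ≤ (4 * (1 - ν) + δ * (4 - 4 * ν + 2 * ν ^ 2)) * b ^ 2 := by linarith
    have h6 : δ * ((2 - ν) * (r ^ 2 * t ^ 2 / δ) + 4 * (1 - ν) * t ^ 2) = D * t ^ 2 := by
      rw [hr2, hD]
      field_simp
    have h7 := mul_le_mul_of_nonneg_left h5 (mul_nonneg hδ0.le (by linarith : 0 ≤ 1 - δ))
    have h8 : δ * (1 - δ) * ((2 - ν) * (r ^ 2 * t ^ 2 / δ) + 4 * (1 - ν) * t ^ 2)
        = (1 - δ) * t ^ 2 * D := by linear_combination (1 - δ) * h6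
    rw [h8] at h7
    refine h7.trans_eq ?_
    rw [hD]
    ring
  have hsε : 0 ≤ (s - r) * ε := mul_nonneg (sub_nonneg.mpr hrs) hε
  set θ := 1 - (1 + ν) * δ with hθ
  rcases le_or_gt θ 0 with hθ0 | hθ0
  · have h1 : 4 * δ * (1 - ν) * (1 + δ) * θ * b ^ 2 ≤ 0 := by
      refine mul_nonpos_of_nonpos_of_nonneg (mul_nonpos_of_nonneg_of_nonpos ?_ hθ0) (sq_nonneg b)
      have : 0 < 1 - ν := by linarith
      positivity
    have h2 : (r * t) ^ 2 ≤ (g * δ * b) ^ 2 := by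
      refine le_of_mul_le_mul_right ?_ hD0
      rw [mul_pow, mul_pow, mul_pow, hr2, hg2]
      linarith
    linarith [(abs_le_of_sq_le_sq' h2 hgb).2]
  rcases le_or_gt ((1 - δ) ^ 2) ((1 + δ) * θ) with hcase | hcase
  · have h1 : ((1 - δ) * a) ^ 2 ≤ (s * ε) ^ 2 := by
      rw [mul_pow, mul_pow, hs2]
      have h2 := mul_le_mul_of_nonneg_left hlow (by linarith : 0 ≤ 1 + δ)
      have h3 := mul_le_mul_of_nonneg_right hcase (sq_nonneg a)
      have h4 : 0 ≤ (1 + δ) * θ * b ^ 2 := by positivity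
      linarith
    have h2 := (abs_le_of_sq_le_sq' h1 (by positivity)).2
    rw [← hr2] at h2
    linarith
  · have hνδ : 2 * (1 - δ) ≤ ν * (1 + δ) := by
      refine le_of_mul_le_mul_left ?_ hδ0
      linarith
    have hscalar := one_sub_mul_one_add_mul_sqrt_le hδ0 hδ1 hν1.le hνδ
    rw [← hr, ← hD] at hscalar
    set η := Real.sqrt θ with hη
    have hη0 : 0 ≤ η := Real.sqrt_nonneg _
    have hη2 : η ^ 2 = θ := Real.sq_sqrt hθ0.le
    have hηε : η * b ≤ ε := by
      refine (abs_le_of_sq_le_sq' ?_ hε).2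
      rw [mul_pow, hη2]
      have : 0 ≤ θ * a ^ 2 := by positivity
      linarith
    have hsη : s * η ≤ r ^ 2 := by
      refine (abs_le_of_sq_le_sq' ?_ (sq_nonneg r)).2
      rw [mul_pow, hs2, hη2, hr2]
      exact hcase.le
    have h2r : 2 * r ≤ g * s := by
      refine (abs_le_of_sq_le_sq' ?_ (by positivity)).2
      rw [mul_pow, mul_pow, hr2, hs2, hg2]
      linarith
    have hδrs : δ ≤ s - r := by
      have hsr : s + r ≤ 2 := by
        refine (abs_le_of_sq_le_sq' ?_ zero_le_two).2
        linarith [sq_nonneg (s - r)]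
      refine le_of_mul_le_mul_right ?_ (add_pos hs0 hr0)
      have := mul_le_mul_of_nonneg_left hsr hδ0.le
      linarith
    -- the defect term of `hmain` is dominated by the mixed term of a square
    have hdefect : 4 * δ * (1 - ν) * (1 + δ) * η ≤ 2 * g * δ ^ 2 * D := by
      have hc : 0 ≤ δ * (1 - ν) * s := by
        have : 0 < 1 - ν := by linarith
        positivity
      have h1 := mul_le_mul_of_nonneg_left hsη hc
      have h2 := mul_le_mul_of_nonneg_left h2r (mul_nonneg hc hr0.le)
      have h3 := mul_le_mul_of_nonneg_left hscalar (mul_nonneg hg0 hδ0.le)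
      rw [← hs2] at h3 ⊢
      linarith
    have h1 : (r * t) ^ 2 ≤ (g * δ * b + δ * ε) ^ 2 := by
      refine le_of_mul_le_mul_right ?_ hD0
      have h2 := mul_le_mul_of_nonneg_right hdefect (mul_nonneg hη0 (sq_nonneg b))
      have h3 := mul_le_mul_of_nonneg_left hηε
        (by positivity : 0 ≤ 2 * g * δ ^ 2 * D * b)
      have h4 : 0 ≤ (δ * ε) ^ 2 * D := by positivity
      rw [← hη2, ← hr2] at hmain
      have h5 : (g * δ * b) ^ 2 = 2 * ν * δ ^ 2 * b ^ 2 := by rw [mul_pow, mul_pow, hg2]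
      have h6 : (g * δ * b + δ * ε) ^ 2 * D
          = 2 * ν * δ ^ 2 * b ^ 2 * D + 2 * g * δ ^ 2 * D * b * ε + (δ * ε) ^ 2 * D := by
        rw [← h5]
        ring
      rw [h6]
      linarith
    have h2 := (abs_le_of_sq_le_sq' h1 (by positivity)).2
    have h3 := mul_le_mul_of_nonneg_right hδrs hε
    linarith

/-- Blockwise near-isometry controls the part of a sum lying on a block of size `2k` by the part
off the block and the norm of the sum. -/
lemma IsBlockNearIsometry.sqrt_sum_le {ι E : Type*} [DecidableEq ι] [NormedAddCommGroup E]
    [InnerProductSpace ℝ E] {b : ι → E} {p : ι → ℝ} {k : ℕ} {δ : ℝ} (hk : 0 < k)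
    (hδ0 : 0 < δ) (hδ1 : δ < 1) (hp : ∀ i, 0 ≤ p i) (H : IsBlockNearIsometry b p (2 * k) δ)
    {T U : Finset ι} (hTU : Disjoint T U) (hT : T.card = 2 * k) {ν : ℝ} (hν : ν * k = U.card) :
    (1 - δ) * Real.sqrt (∑ i ∈ T, p i)
      ≤ Real.sqrt (2 * ν) * δ * Real.sqrt (∑ i ∈ U, p i)
        + Real.sqrt (1 + δ) * ‖∑ i ∈ T ∪ U, b i‖ := by
  have hk0 : (0 : ℝ) < k := by exact_mod_cast hk
  have hν0 : 0 ≤ ν := nonneg_of_mul_nonneg_left (hν ▸ Nat.cast_nonneg U.card) hk0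
  obtain ⟨a, ha_def⟩ : ∃ a, a = Real.sqrt (∑ i ∈ T, p i) := ⟨_, rfl⟩
  obtain ⟨c, hc_def⟩ : ∃ c, c = Real.sqrt (∑ i ∈ U, p i) := ⟨_, rfl⟩
  have ha0 : 0 ≤ a := ha_def ▸ Real.sqrt_nonneg _
  have hc0 : 0 ≤ c := hc_def ▸ Real.sqrt_nonneg _
  have ha2 : a ^ 2 = ∑ i ∈ T, p i :=
    ha_def ▸ Real.sq_sqrt (Finset.sum_nonneg fun i _ => hp i)
  have hc2 : c ^ 2 = ∑ i ∈ U, p i :=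
    hc_def ▸ Real.sq_sqrt (Finset.sum_nonneg fun i _ => hp i)
  have hlow := H.lower_bound hk (T ∪ U) (by rw [Finset.card_union_of_disjoint hTU]; omega)
  rw [Finset.card_union_of_disjoint hTU, hT, Finset.sum_union hTU, Finset.sum_union hTU] at hlow
  have hPT := H.single hT.le
  have hXlarge := fun h : k ≤ U.card => H.neg_inner_le_of_le_card hk hTU hT h
  have hXsmall := fun h : U.card < k => H.neg_inner_le_of_card_lt hTU hT h hν
  rw [Finset.sum_union hTU]
  push_cast at hlow
  rw [← hν] at hlow hXlarge
  simp only [← ha2, ← hc2] at hlow hPT hXlarge hXsmall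
  rw [← ha_def, ← hc_def]
  clear ha2 hc2 ha_def hc_def
  generalize ∑ i ∈ T, b i = u at *
  generalize ∑ i ∈ U, b i = v at *
  have hPX : ‖u‖ ^ 2 - -inner ℝ u v ≤ ‖u‖ * ‖u + v‖ := by
    have := real_inner_le_norm u (u + v)
    rw [inner_add_right, real_inner_self_eq_norm_sq] at this
    linarith
  rcases ha0.eq_or_lt with rfl | ha
  · simp only [mul_zero]
    positivity
  rcases lt_or_ge U.card k with hU | hU
  · refine one_sub_mul_le_of_small_complement (P := ‖u‖ ^ 2) (R := ‖v‖ ^ 2) (X := -inner ℝ u v)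
      hδ0 hδ1 hν0 ?_ ha hc0 (norm_nonneg _) hPT.1 ?_ ?_ (hXsmall hU) ?_
    · refine lt_of_mul_lt_mul_right ?_ hk0.le
      rw [hν, one_mul]
      exact_mod_cast hU
    · rwa [Real.sqrt_sq (norm_nonneg u)]
    · rw [norm_add_sq_real]
      ring
    · refine le_of_mul_le_mul_left ?_ hk0
      linarith
  · have hX : -inner ℝ u v ≤ Real.sqrt (2 * ν) * δ * a * c := by
      have hquad : ∀ α : ℝ, 0 ≤ δ * ν * a ^ 2 * (α * α) + -2 * -inner ℝ u v * α
          + 2 * δ * c ^ 2 := by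
        intro α
        have := hXlarge hU α 1
        refine le_of_mul_le_mul_left ?_ hk0
        linarith
      have hdisc := discrim_le_zero hquad
      rw [discrim] at hdisc
      refine (abs_le_of_sq_le_sq' ?_ (by positivity)).2
      rw [mul_pow, mul_pow, mul_pow, Real.sq_sqrt (by linarith)]
      linarith
    have hnorm : ‖u‖ ≤ Real.sqrt (1 + δ) * a := by
      refine (abs_le_of_sq_le_sq' ?_ (by positivity)).2
      rw [mul_pow, Real.sq_sqrt (by linarith)]
      exact hPT.2
    refine le_of_mul_le_mul_left ?_ ha
    have := mul_le_mul_of_nonneg_right hnorm (norm_nonneg (u + v))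
    linarith

lemma l2norm_sq {n : ℕ} (u : Fin n → ℝ) : l2norm u ^ 2 = ∑ i, u i ^ 2 :=
  Real.sq_sqrt (Finset.sum_nonneg fun i _ => sq_nonneg (u i))

lemma l2norm_restrict {n : ℕ} (u : Fin n → ℝ) (I : Finset (Fin n)) :
    l2norm (restrict u I) = Real.sqrt (∑ i ∈ I, u i ^ 2) := by
  simp [l2norm, _root_.restrict, ite_pow]

lemma l2norm_eq_norm {n : ℕ} (u : Fin n → ℝ) : l2norm u = ‖WithLp.toLp 2 u‖ := by
  simp [l2norm, EuclideanSpace.norm_eq]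

/-- The weighted columns `h i • A e_i`, as vectors of a Euclidean space. -/
noncomputable def weightedColumn {m n : ℕ} (A : Matrix (Fin m) (Fin n) ℝ) (h : Fin n → ℝ)
    (i : Fin n) : EuclideanSpace ℝ (Fin m) :=
  WithLp.toLp 2 (A.mulVec (Pi.single i (h i)))

lemma sum_weightedColumn {m n : ℕ} (A : Matrix (Fin m) (Fin n) ℝ) (h : Fin n → ℝ)
    (I : Finset (Fin n)) :
    ∑ i ∈ I, weightedColumn A h i = WithLp.toLp 2 (A.mulVec (restrict h I)) := by
  have hI : restrict h I = ∑ i ∈ I, Pi.single i (h i) := by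
    ext j
    simp [_root_.restrict, Finset.sum_apply, Pi.single_apply]
  rw [hI, Matrix.mulVec_sum, WithLp.toLp_sum]
  rfl

lemma SatisfiesRIP.isBlockNearIsometry {m n s : ℕ} {A : Matrix (Fin m) (Fin n) ℝ} {δ : ℝ}
    (hA : SatisfiesRIP A s δ) (h : Fin n → ℝ) :
    IsBlockNearIsometry (weightedColumn A h) (fun i => h i ^ 2) s δ := by
  intro I J hIJ hs α β
  have hvec : α • ∑ i ∈ I, weightedColumn A h i + β • ∑ i ∈ J, weightedColumn A h i
      = WithLp.toLp 2 (A.mulVec (α • restrict h I + β • restrict h J)) := by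
    rw [sum_weightedColumn, sum_weightedColumn, Matrix.mulVec_add, Matrix.mulVec_smul,
      Matrix.mulVec_smul]
    rfl
  have hsq : l2norm (α • restrict h I + β • restrict h J) ^ 2
      = α ^ 2 * ∑ i ∈ I, h i ^ 2 + β ^ 2 * ∑ i ∈ J, h i ^ 2 := by
    have hi : ∀ i, (α • restrict h I + β • restrict h J) i ^ 2
        = α ^ 2 * (if i ∈ I then h i ^ 2 else 0) + β ^ 2 * (if i ∈ J then h i ^ 2 else 0) := by
      intro i
      by_cases hiI : i ∈ I
      · simp [_root_.restrict, hiI, Finset.disjoint_left.mp hIJ hiI, mul_pow]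
      · by_cases hiJ : i ∈ J <;> simp [_root_.restrict, hiI, hiJ, mul_pow]
    rw [l2norm_sq, Finset.sum_congr rfl fun i _ => hi i, Finset.sum_add_distrib,
      ← Finset.mul_sum, ← Finset.mul_sum]
    simp
  rw [hvec, ← l2norm_eq_norm, ← hsq]
  refine hA _ ((Finset.card_le_card (t := I ∪ J) fun i hi => ?_).trans
    ((Finset.card_union_le I J).trans hs))
  contrapose! hi
  simp only [Finset.mem_union, not_or] at hi
  simp [_root_.restrict, hi.1, hi.2]

lemma l2norm_restrict_sub_le {n : ℕ} (x y : Fin n → ℝ) (I : Finset (Fin n)) :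
    l2norm (restrict (y - x) I) ≤ l2norm (restrict x I) + l2norm (restrict y I) := by
  have hsub : restrict (y - x) I = restrict y I - restrict x I := by
    ext i
    by_cases hi : i ∈ I <;> simp [_root_.restrict, hi]
  rw [hsub, l2norm_eq_norm, l2norm_eq_norm, l2norm_eq_norm, WithLp.toLp_sub, add_comm]
  exact norm_sub_le _ _

lemma l2norm_restrict_mono {n : ℕ} (u : Fin n → ℝ) {I J : Finset (Fin n)} (hIJ : I ⊆ J) :
    l2norm (restrict u I) ≤ l2norm (restrict u J) := by
  rw [l2norm_restrict, l2norm_restrict]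
  exact Real.sqrt_le_sqrt (Finset.sum_le_sum_of_subset_of_nonneg hIJ fun i _ _ => sq_nonneg _)

/-- Stability of effective nonzeros under noise (Theorem 3 of the paper):
if `A` satisfies the 2k-RIP with constant δ, `S_x` and `S_y` are the index sets
of the k largest-magnitude entries of x and y, `T = S_x ∪ S_y`, `h = y − x`,
the tails satisfy `‖x_{S_x^c}‖₂ ≤ ε_x`, `‖y_{S_y^c}‖₂ ≤ ε_y`, and `Ah = e`, then
`‖h_T‖₂ ≤ (√(2(n−2k))·δ/((1−δ)√k))·(ε_x+ε_y) + (√(1+δ)/(1−δ))·‖e‖₂`. -/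
theorem stability_effective_nonzeros {m n k : ℕ} (hk : 0 < k) (hn : 2 * k ≤ n)
    (A : Matrix (Fin m) (Fin n) ℝ) (δ : ℝ) (hδ0 : 0 < δ) (hδ1 : δ < 1)
    (hRIP : SatisfiesRIP A (2 * k) δ)
    (x y : Fin n → ℝ) (Sx Sy : Finset (Fin n))
    (hSx : Sx.card = k) (hSy : Sy.card = k)
    (hSxTop : ∀ i ∈ Sx, ∀ j ∉ Sx, |x j| ≤ |x i|)
    (hSyTop : ∀ i ∈ Sy, ∀ j ∉ Sy, |y j| ≤ |y i|)
    (εx εy : ℝ)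
    (htailx : l2norm (restrict x Sxᶜ) ≤ εx)
    (htaily : l2norm (restrict y Syᶜ) ≤ εy)
    (e : Fin m → ℝ) (he : A.mulVec (y - x) = e) :
    l2norm (restrict (y - x) (Sx ∪ Sy)) ≤
      (Real.sqrt (2 * ((n : ℝ) - 2 * k)) * δ / ((1 - δ) * Real.sqrt k)) *
        (εx + εy) +
      (Real.sqrt (1 + δ) / (1 - δ)) * l2norm e := by
  have hk0 : (0 : ℝ) < k := by exact_mod_cast hk
  have hδ : 0 < 1 - δ := by linarith
  obtain ⟨T, hST, hT⟩ := Finset.exists_superset_card_eq (s := Sx ∪ Sy) (n := 2 * k)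
    ((Finset.card_union_le Sx Sy).trans (by omega)) (by simpa using hn)
  have hcompl : (Tᶜ.card : ℝ) = n - 2 * k := by
    rw [Finset.card_compl, hT, Fintype.card_fin, Nat.cast_sub hn]
    push_cast
    rfl
  have htail : l2norm (restrict (y - x) Tᶜ) ≤ εx + εy := by
    have hx : Tᶜ ⊆ Sxᶜ := Finset.compl_subset_compl.mpr (Finset.subset_union_left.trans hST)
    have hy : Tᶜ ⊆ Syᶜ := Finset.compl_subset_compl.mpr (Finset.subset_union_right.trans hST)
    exact (l2norm_restrict_sub_le x y Tᶜ).trans (add_le_add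
      ((l2norm_restrict_mono x hx).trans htailx) ((l2norm_restrict_mono y hy).trans htaily))
  have hmain := (hRIP.isBlockNearIsometry (y - x)).sqrt_sum_le hk hδ0 hδ1
    (fun i => sq_nonneg _) disjoint_compl_right hT (ν := (n - 2 * k) / k)
    (by rw [hcompl, div_mul_cancel₀ _ hk0.ne'])
  have huniv : restrict (y - x) (T ∪ Tᶜ) = y - x := by
    ext i
    simp [_root_.restrict]
  rw [← l2norm_restrict, ← l2norm_restrict, sum_weightedColumn, huniv, he, ← l2norm_eq_norm,
    ← mul_div_assoc, Real.sqrt_div' _ hk0.le] at hmain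
  have hcoef := mul_le_mul_of_nonneg_left htail
    (by positivity : 0 ≤ Real.sqrt (2 * ((n : ℝ) - 2 * k)) / Real.sqrt k * δ)
  refine (l2norm_restrict_mono _ hST).trans (le_of_mul_le_mul_left ?_ hδ)
  refine (hmain.trans (add_le_add_left hcoef _)).trans_eq ?_
  field_simp
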